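/- arXiv:2207.02040 — 2 statements merged into one kernel-verified Lean document; each statement's English description precedes it below -/
import Mathlib

section
/- Let n ≥ 3 and let S be a set of pairwise non-crossing chords of the standard n-cycle. Suppose there exist seven pairwise distinct vertices c, a_1, a_2, a_3, b_1, b_2, b_3 of ZMod n such that {c, a_i} ∈ S and {a_i, b_i} ∈ S for i = 1, 2, 3 (i.e. the chord graph contains a spider with three legs of length two). Then at least three vertices of ZMod n are chord-free for S. (This is the key step in the proof of the paper's Lemma 4: a non-caterpillar component of the chord graph forces at least three vertices of degree three in the polytope.) -/
/-- The vertices strictly between `a` and `b`, traversing the cycle `ZMod n`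
from `a` towards `b` in the direction of increasing residues. -/
def Between (n : ℕ) (a b v : ZMod n) : Prop :=
  0 < (v - a).val ∧ (v - a).val < (b - a).val

/-- `e` is an edge of the standard `n`-cycle on `ZMod n`. -/
def IsCycleEdge (n : ℕ) (e : Sym2 (ZMod n)) : Prop :=
  ∃ i : ZMod n, e = s(i, i + 1)

/-- A chord: an unordered pair of distinct vertices of `ZMod n` that is not an
edge of the standard `n`-cycle. -/
def IsChord (n : ℕ) (e : Sym2 (ZMod n)) : Prop :=
  ¬ e.IsDiag ∧ ¬ IsCycleEdge n e

/-- Two chords cross if exactly one endpoint of the second lies strictly between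
the endpoints of the first (traversing in the direction of increasing residues). -/
def Cross (n : ℕ) (e f : Sym2 (ZMod n)) : Prop :=
  ∀ a b c d : ZMod n, e = s(a, b) → f = s(c, d) →
    Xor' (Between n a b c) (Between n a b d)

/-- `S` is a set of pairwise non-crossing chords of the standard `n`-cycle. -/
def NonCrossingChords (n : ℕ) (S : Set (Sym2 (ZMod n))) : Prop :=
  (∀ e ∈ S, IsChord n e) ∧ ∀ e ∈ S, ∀ f ∈ S, e ≠ f → ¬ Cross n e f

/-- The chord graph of a set `S` of chords: the simple graph on `ZMod n`
whose edge set is `S`. -/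
def chordGraph (n : ℕ) (S : Set (Sym2 (ZMod n))) : SimpleGraph (ZMod n) :=
  SimpleGraph.fromEdgeSet S

/-- A vertex is chord-free for `S` if it is incident to no chord of `S`. -/
def ChordFree (n : ℕ) (S : Set (Sym2 (ZMod n))) (v : ZMod n) : Prop :=
  ∀ e ∈ S, v ∉ e

/-- An outerplane graph on `n` vertices: a simple graph on `ZMod n` whose edge
set is the (disjoint) union of the standard `n`-cycle and a set of pairwise
non-crossing chords. -/
def IsOuterplane (n : ℕ) (G : SimpleGraph (ZMod n)) : Prop :=
  ∃ S : Set (Sym2 (ZMod n)), NonCrossingChords n S ∧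
    G.edgeSet = {e | IsCycleEdge n e} ∪ S

/-- The multiset of vertex degrees of a graph on a finite vertex type. -/
noncomputable def degMultiset {V : Type*} [Fintype V] (G : SimpleGraph V) : Multiset ℕ := by
  classical exact Finset.univ.val.map fun v => G.degree v

/-- The multiset of vertex degrees of a graph on `ZMod n` (junk value for `n = 0`). -/
noncomputable def degreeMultiset (n : ℕ) (G : SimpleGraph (ZMod n)) : Multiset ℕ :=
  if h : n = 0 then 0
  else by haveI : NeZero n := ⟨h⟩; exact degMultiset G

/-- `M` is outerplane-unigraphic on `n` vertices: there is an outerplane graph on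
`n` vertices with degree multiset `M`, and any two such are isomorphic. -/
def OuterplaneUnigraphic (n : ℕ) (M : Multiset ℕ) : Prop :=
  (∃ G : SimpleGraph (ZMod n), IsOuterplane n G ∧ degreeMultiset n G = M) ∧
  ∀ G G' : SimpleGraph (ZMod n), IsOuterplane n G → IsOuterplane n G' →
    degreeMultiset n G = M → degreeMultiset n G' = M → Nonempty (G ≃g G')

/-- A caterpillar: a connected acyclic graph (tree) in which all vertices of
degree at least two lie on a common path. -/
def IsCaterpillar {V : Type*} (G : SimpleGraph V) : Prop :=
  G.Connected ∧ G.IsAcyclic ∧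
    ∃ (u w : V) (p : G.Walk u w), p.IsPath ∧
      ∀ v : V, (∃ a b : V, a ≠ b ∧ G.Adj v a ∧ G.Adj v b) → v ∈ p.support

/-!
Every chord `{a, b}` has a chord-free vertex strictly inside each of its two arcs: either `a + 1` is
chord-free, or a chord at `a + 1` stays within the arc by non-crossing and spans a shorter one.

Number the vertices by their distance from `c` in the direction of increasing residues, and let
`a₁ < a₂ < a₃` in this numbering. The arc from `c` to `a₁` and the arc from `a₃` to `c` each contain
a chord-free vertex. The chord from `a₂` to some `b ≠ c` crosses neither `{c, a₁}` nor `{c, a₃}`, so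
`a₁ ≤ b ≤ a₃`, and the arc between `a₂` and `b` contains a third one.
-/

section Arcs

variable {n : ℕ} {a b c v : ZMod n}

theorem Between.ne_left (h : Between n a b v) : v ≠ a :=
  sub_ne_zero.mp (ZMod.val_pos.mp h.1)

theorem Between.ne_right (h : Between n a b v) : v ≠ b := by
  rintro rfl
  exact h.2.false

theorem Between.left_ne_right (h : Between n a b v) : a ≠ b := by
  rintro rfl
  simp [Between] at h

variable [NeZero n]

theorem val_sub_of_val_lt (h : a.val < b.val) : (a - b).val = n + a.val - b.val := by
  have hne : b - a ≠ 0 := sub_ne_zero.mpr fun hba => h.ne (congrArg ZMod.val hba.symm)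
  have hb := b.val_lt
  rw [← neg_sub, ZMod.neg_val, if_neg hne, ZMod.val_sub h.le]
  omega

theorem val_sub_lt_or_lt (h : a ≠ b) : (a - c).val < (b - c).val ∨ (b - c).val < (a - c).val :=
  lt_or_gt_of_ne fun hval => h (sub_left_injective (ZMod.val_injective n hval))

theorem between_iff_val_sub_mem_Ioo (hab : (a - c).val < (b - c).val) :
    Between n a b v ↔ (v - c).val ∈ Set.Ioo (a - c).val (b - c).val := by
  have hb := (b - c).val_lt
  rw [Set.mem_Ioo, Between, ← sub_sub_sub_cancel_right v a c, ← sub_sub_sub_cancel_right b a c,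
    ZMod.val_sub hab.le]
  rcases le_or_gt (a - c).val (v - c).val with hav | hva
  · rw [ZMod.val_sub hav]
    omega
  · rw [val_sub_of_val_lt hva]
    omega

theorem between_iff_val_sub_lt (hac : a ≠ c) :
    Between n a c v ↔ (a - c).val < (v - c).val := by
  have ha : 0 < (a - c).val := ZMod.val_pos.mpr (sub_ne_zero.mpr hac)
  have hn := (a - c).val_lt
  have hv := (v - c).val_lt
  rw [Between, ← sub_sub_sub_cancel_right v a c, ← sub_sub_sub_cancel_right c a c, sub_self,
    val_sub_of_val_lt (a := 0) (by rwa [ZMod.val_zero]), ZMod.val_zero]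
  rcases le_or_gt (a - c).val (v - c).val with hav | hva
  · rw [ZMod.val_sub hav]
    omega
  · rw [val_sub_of_val_lt hva]
    omega

theorem between_swap_iff_not (hab : a ≠ b) (hva : v ≠ a) (hvb : v ≠ b) :
    Between n b a v ↔ ¬ Between n a b v := by
  have hpos : 0 < (v - a).val := ZMod.val_pos.mpr (sub_ne_zero.mpr hva)
  have hne := val_sub_lt_or_lt (c := a) hvb
  rw [between_iff_val_sub_lt hab.symm, Between]
  omega

end Arcs

section NonCrossing

variable {n : ℕ} {S : Set (Sym2 (ZMod n))} {a b c x y : ZMod n}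

theorem IsChord.ne (h : IsChord n s(a, b)) : a ≠ b := by
  simpa using h.1

theorem IsChord.ne_add_one (h : IsChord n s(a, b)) : b ≠ a + 1 := by
  rintro rfl
  exact h.2 ⟨a, rfl⟩

variable [NeZero n]

theorem cross_of_between_of_not_between (hx : Between n a b x) (hy : ¬ Between n a b y)
    (hya : y ≠ a) (hyb : y ≠ b) : Cross n s(a, b) s(x, y) := by
  have hx' := between_swap_iff_not hx.left_ne_right hx.ne_left hx.ne_right
  have hy' := between_swap_iff_not hx.left_ne_right hya hyb
  intro a' b' x' y' hab hxy
  rcases Sym2.eq_iff.mp hab with ⟨rfl, rfl⟩ | ⟨rfl, rfl⟩ <;>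
    rcases Sym2.eq_iff.mp hxy with ⟨rfl, rfl⟩ | ⟨rfl, rfl⟩ <;>
    change Xor _ _ <;> simp [xor_def, hx, hy, hx', hy']

theorem IsChord.one_lt_val_sub (h : IsChord n s(a, b)) : 1 < (b - a).val := by
  have h0 : (b - a).val ≠ 0 := by simpa [sub_eq_zero] using h.ne.symm
  have h1 : (b - a).val ≠ 1 := fun hval => h.ne_add_one <| by
    rw [← sub_eq_iff_eq_add', ← ZMod.natCast_zmod_val (b - a), hval, Nat.cast_one]
  omega

theorem IsChord.val_add_one_sub (h : IsChord n s(a, b)) : (a + 1 - a).val = 1 := by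
  have hlong := h.one_lt_val_sub
  have hlt := (b - a).val_lt
  rw [add_sub_cancel_left, ZMod.val_one'' (by omega)]

theorem IsChord.between_add_one (h : IsChord n s(a, b)) : Between n a b (a + 1) := by
  rw [Between, h.val_add_one_sub]
  exact ⟨one_pos, h.one_lt_val_sub⟩

namespace NonCrossingChords

theorem eq_or_eq_or_between (hS : NonCrossingChords n S) (hab : s(a, b) ∈ S) (hxy : s(x, y) ∈ S)
    (hx : Between n a b x) : y = a ∨ y = b ∨ Between n a b y := by
  by_contra! hy
  refine hS.2 _ hab _ hxy (fun heq => ?_) (cross_of_between_of_not_between hx hy.2.2 hy.1 hy.2.1)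
  have hmem : y ∈ s(a, b) := heq ▸ Sym2.mem_mk_right x y
  exact (Sym2.mem_iff.mp hmem).elim hy.1 hy.2.1

theorem val_sub_mem_Ioc_of_add_one (hS : NonCrossingChords n S) (hab : s(a, b) ∈ S)
    (hchord : s(a + 1, y) ∈ S) : (y - a).val ∈ Set.Ioc 1 (b - a).val := by
  have hya : y ≠ a := by
    rintro rfl
    exact (hS.1 _ (Sym2.eq_swap ▸ hchord)).ne_add_one rfl
  constructor
  · have hpos : 0 < (y - a).val := ZMod.val_pos.mpr (sub_ne_zero.mpr hya)
    have hne := val_sub_lt_or_lt (c := a) (hS.1 _ hchord).ne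
    have hone := (hS.1 _ hab).val_add_one_sub
    omega
  · rcases hS.eq_or_eq_or_between hab hchord (hS.1 _ hab).between_add_one with h | rfl | h
    exacts [absurd h hya, le_rfl, h.2.le]

theorem exists_chordFree_between (hS : NonCrossingChords n S) (hab : s(a, b) ∈ S) :
    ∃ v, Between n a b v ∧ ChordFree n S v := by
  induction hlen : (b - a).val using Nat.strong_induction_on generalizing a b with
  | _ len ih =>
  by_cases hfree : ChordFree n S (a + 1)
  · exact ⟨a + 1, (hS.1 _ hab).between_add_one, hfree⟩
  simp only [ChordFree, not_forall, not_not] at hfree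
  obtain ⟨_, hchord, w, rfl⟩ := hfree
  obtain ⟨hw_gt, hw_le⟩ := hS.val_sub_mem_Ioc_of_add_one hab hchord
  have hone := (hS.1 _ hab).val_add_one_sub
  rw [← hone] at hw_gt
  have hshorter : (w - (a + 1)).val < len := by
    rw [← sub_sub_sub_cancel_right w (a + 1) a, ZMod.val_sub hw_gt.le]
    omega
  obtain ⟨v, hv, hvfree⟩ := ih _ hshorter hchord rfl
  rw [between_iff_val_sub_mem_Ioo hw_gt] at hv
  exact ⟨v, ⟨Nat.zero_lt_of_lt hv.1, hv.2.trans_le hw_le⟩, hvfree⟩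

theorem exists_chordFree_val_sub_mem_Ioo (hS : NonCrossingChords n S) (hab : s(a, b) ∈ S)
    (hlt : (a - c).val < (b - c).val) :
    ∃ v, (v - c).val ∈ Set.Ioo (a - c).val (b - c).val ∧ ChordFree n S v := by
  simpa only [between_iff_val_sub_mem_Ioo hlt] using hS.exists_chordFree_between hab

theorem val_sub_mem_Icc_of_mem_Ioo (hS : NonCrossingChords n S) (hca : s(c, a) ∈ S)
    (hcb : s(c, b) ∈ S) (hxy : s(x, y) ∈ S)
    (hx : (x - c).val ∈ Set.Ioo (a - c).val (b - c).val) (hyc : y ≠ c) :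
    (y - c).val ∈ Set.Icc (a - c).val (b - c).val := by
  have hac : a ≠ c := (hS.1 _ hca).ne.symm
  constructor
  · rcases hS.eq_or_eq_or_between (Sym2.eq_swap ▸ hca) hxy ((between_iff_val_sub_lt hac).mpr hx.1)
      with rfl | h | h
    exacts [le_rfl, absurd h hyc, ((between_iff_val_sub_lt hac).mp h).le]
  · rcases hS.eq_or_eq_or_between hcb hxy ⟨Nat.zero_lt_of_lt hx.1, hx.2⟩ with h | rfl | h
    exacts [absurd h hyc, le_rfl, h.2.le]

theorem exists_chordFree_mem_Ioo_of_mem_Ioo (hS : NonCrossingChords n S) (hca : s(c, a) ∈ S)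
    (hcb : s(c, b) ∈ S) (hxy : s(x, y) ∈ S)
    (hx : (x - c).val ∈ Set.Ioo (a - c).val (b - c).val) (hyc : y ≠ c) :
    ∃ v, (v - c).val ∈ Set.Ioo (a - c).val (b - c).val ∧ ChordFree n S v := by
  obtain ⟨hay, hyb⟩ := hS.val_sub_mem_Icc_of_mem_Ioo hca hcb hxy hx hyc
  rcases val_sub_lt_or_lt (c := c) (hS.1 _ hxy).ne with hlt | hlt
  · obtain ⟨v, hv, hfree⟩ := hS.exists_chordFree_val_sub_mem_Ioo hxy hlt
    exact ⟨v, ⟨hx.1.trans hv.1, hv.2.trans_le hyb⟩, hfree⟩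
  · obtain ⟨v, hv, hfree⟩ := hS.exists_chordFree_val_sub_mem_Ioo (Sym2.eq_swap ▸ hxy) hlt
    exact ⟨v, ⟨hay.trans_lt hv.1, hv.2.trans hx.2⟩, hfree⟩

theorem three_chordFree_of_mem_Ioo (hS : NonCrossingChords n S) (hca : s(c, a) ∈ S)
    (hcb : s(c, b) ∈ S) (hxy : s(x, y) ∈ S)
    (hx : (x - c).val ∈ Set.Ioo (a - c).val (b - c).val) (hyc : y ≠ c) :
    ∃ v₁ v₂ v₃ : ZMod n, v₁ ≠ v₂ ∧ v₁ ≠ v₃ ∧ v₂ ≠ v₃ ∧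
      ChordFree n S v₁ ∧ ChordFree n S v₂ ∧ ChordFree n S v₃ := by
  obtain ⟨v₁, ⟨-, h₁a⟩, hfree₁⟩ := hS.exists_chordFree_between hca
  obtain ⟨v₂, ⟨ha₂, h₂b⟩, hfree₂⟩ := hS.exists_chordFree_mem_Ioo_of_mem_Ioo hca hcb hxy hx hyc
  obtain ⟨v₃, hb₃, hfree₃⟩ := hS.exists_chordFree_between (Sym2.eq_swap ▸ hcb)
  rw [between_iff_val_sub_lt (hS.1 _ hcb).ne.symm] at hb₃
  refine ⟨v₁, v₂, v₃, ?_, ?_, ?_, hfree₁, hfree₂, hfree₃⟩ <;>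
    · rintro rfl
      omega

end NonCrossingChords

end NonCrossing

theorem three_chord_free_of_spider_general {n : ℕ} [NeZero n] {S : Set (Sym2 (ZMod n))}
    (hS : NonCrossingChords n S) {c : ZMod n} {a b : Fin 3 → ZMod n} (ha : Function.Injective a)
    (hca : ∀ i, s(c, a i) ∈ S) (hab : ∀ i, s(a i, b i) ∈ S) (hbc : ∀ i, b i ≠ c) :
    ∃ v₁ v₂ v₃ : ZMod n, v₁ ≠ v₂ ∧ v₁ ≠ v₃ ∧ v₂ ≠ v₃ ∧
      ChordFree n S v₁ ∧ ChordFree n S v₂ ∧ ChordFree n S v₃ := by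
  let pos : Fin 3 → ℕ := fun i => (a i - c).val
  have hpos : Function.Injective pos := (ZMod.val_injective n).comp (sub_left_injective.comp ha)
  let σ := Tuple.sort pos
  have hσ : StrictMono (pos ∘ σ) :=
    (Tuple.monotone_sort pos).strictMono_of_injective (hpos.comp σ.injective)
  exact hS.three_chordFree_of_mem_Ioo (hca (σ 0)) (hca (σ 2)) (hab (σ 1))
    ⟨hσ (by decide : (0 : Fin 3) < 1), hσ (by decide : (1 : Fin 3) < 2)⟩ (hbc (σ 1))

/-- Key step in the proof of the paper's Lemma 4: a spider with three legs of
length two in the chord graph forces at least three chord-free vertices. -/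
theorem three_chord_free_of_spider (n : ℕ) (hn : 3 ≤ n)
    (S : Set (Sym2 (ZMod n))) (hS : NonCrossingChords n S)
    (c a₁ a₂ a₃ b₁ b₂ b₃ : ZMod n)
    (hdist : ([c, a₁, a₂, a₃, b₁, b₂, b₃] : List (ZMod n)).Pairwise (· ≠ ·))
    (h1 : s(c, a₁) ∈ S) (h2 : s(c, a₂) ∈ S) (h3 : s(c, a₃) ∈ S)
    (h4 : s(a₁, b₁) ∈ S) (h5 : s(a₂, b₂) ∈ S) (h6 : s(a₃, b₃) ∈ S) :
    ∃ v₁ v₂ v₃ : ZMod n, v₁ ≠ v₂ ∧ v₁ ≠ v₃ ∧ v₂ ≠ v₃ ∧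
      ChordFree n S v₁ ∧ ChordFree n S v₂ ∧ ChordFree n S v₃ := by
  have : NeZero n := ⟨by omega⟩
  apply three_chord_free_of_spider_general hS (c := c) (a := ![a₁, a₂, a₃]) (b := ![b₁, b₂, b₃]) <;>
    simp_all [Function.Injective, Fin.forall_fin_succ, eq_comm]
end

section
/- Let ℓ ≥ 3 and let x_1, …, x_ℓ be integers, each at least 2, such that x_1 ≠ x_j for all 2 ≤ j ≤ ℓ. Then there exist two non-isomorphic trees (both caterpillars) with the same multiset of vertex degrees, namely the multiset consisting of x_1, …, x_ℓ together with 2 + Σ_{i=1}^{ℓ} (x_i − 2) entries equal to 1. (This is the exchange argument used in the proof of the paper's Theorem 1: if the spine degrees of a caterpillar are not all equal and the spine has length at least 3 with x_1 different from all other spine degrees, permuting the spine degrees yields a non-isomorphic realisation of the same degree sequence.) -/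
/-!
Hanging leaves on the vertices of the path `c₁, …, c_ℓ` until `c_j` has degree `x_j` gives the
caterpillar `C(x₁, …, x_ℓ)`, whose degree multiset does not change when the `x_j` are permuted.
As all `x_j ≥ 2`, the spine consists of the vertices of degree other than `1`, so an isomorphism
`C(x) ≃ C(y)` restricts to an automorphism of the path that carries `x` to `y`. Now let `y` be `x`
with its first two entries exchanged. Since the value `x₁` occurs only once, such an automorphism
sends `c₁` to `c₂`; but for `ℓ ≥ 3` these have degrees `1` and `2` in the path.
-/

open SimpleGraph

section Cycles

variable {V : Type*} {G : SimpleGraph V}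

lemma exists_adj_adj_ne_of_mem_support_isCycle {u v : V} {c : G.Walk u u} (hc : c.IsCycle)
    (hv : v ∈ c.support) :
    ∃ a ∈ c.support, ∃ b ∈ c.support, a ≠ b ∧ G.Adj v a ∧ G.Adj v b := by
  obtain ⟨a, b, hab, hN⟩ := Set.ncard_eq_two.1 (hc.ncard_neighborSet_toSubgraph_eq_two hv)
  have ha : c.toSubgraph.Adj v a := hN.ge (Set.mem_insert a {b})
  have hb : c.toSubgraph.Adj v b := hN.ge (Set.mem_insert_of_mem a rfl)
  exact ⟨a, c.mem_verts_toSubgraph.1 ha.snd_mem, b, c.mem_verts_toSubgraph.1 hb.snd_mem,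
    hab, ha.adj_sub, hb.adj_sub⟩

lemma isAcyclic_of_subsingleton_adj_le {α : Type*} [LinearOrder α] (f : V → α)
    (h : ∀ v, {w | G.Adj v w ∧ f w ≤ f v}.Subsingleton) : G.IsAcyclic := by
  classical
  intro u c hc
  obtain ⟨v, hv, hmax⟩ := c.support.toFinset.exists_max_image f
    ⟨u, List.mem_toFinset.2 c.start_mem_support⟩
  obtain ⟨a, ha, b, hb, hab, hva, hvb⟩ :=
    exists_adj_adj_ne_of_mem_support_isCycle hc (List.mem_toFinset.1 hv)
  exact hab (h v ⟨hva, hmax a (List.mem_toFinset.2 ha)⟩ ⟨hvb, hmax b (List.mem_toFinset.2 hb)⟩)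

lemma isAcyclic_of_isAcyclic_induce {s : Set V} (hs : (G.induce s).IsAcyclic)
    (h : ∀ v ∉ s, (G.neighborSet v).Subsingleton) : G.IsAcyclic := by
  intro u c hc
  have hmem : ∀ v ∈ c.support, v ∈ s := by
    intro v hv
    by_contra hvs
    obtain ⟨a, -, b, -, hab, hva, hvb⟩ := exists_adj_adj_ne_of_mem_support_isCycle hc hv
    exact hab (h v hvs hva hvb)
  rw [← c.map_induce hmem] at hc
  exact hs _ hc.of_map

end Cycles

section Isomorphism

variable {V W : Type*} {G : SimpleGraph V} {H : SimpleGraph W}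

lemma IsCaterpillar.of_iso (hG : IsCaterpillar G) (e : G ≃g H) : IsCaterpillar H := by
  obtain ⟨hconn, hacyc, u, w, p, hp, hsupp⟩ := hG
  refine ⟨e.connected_iff.1 hconn, e.isAcyclic_iff.1 hacyc, e u, e w, p.map e.toHom,
    hp.map e.injective, ?_⟩
  rintro v ⟨a, b, hab, hva, hvb⟩
  have hv : e.symm v ∈ p.support := hsupp _ ⟨e.symm a, e.symm b, e.symm.injective.ne hab,
    e.symm.map_adj_iff.2 hva, e.symm.map_adj_iff.2 hvb⟩
  rw [Walk.support_map]
  exact List.mem_map.2 ⟨e.symm v, hv, e.apply_symm_apply v⟩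

lemma degMultiset_eq_of_iso [Fintype V] [Fintype W] (e : G ≃g H) :
    degMultiset G = degMultiset H := by
  classical
  unfold degMultiset
  rw [← Multiset.map_univ_val_equiv e.toEquiv, Multiset.map_map]
  exact Multiset.map_congr rfl fun v _ => (e.degree_eq v).symm

lemma card_degMultiset [Fintype V] (G : SimpleGraph V) :
    (degMultiset G).card = Fintype.card V := by
  simp [degMultiset]

lemma IsCaterpillar.exists_iso_fin [Fintype V] (hG : IsCaterpillar G) {M : Multiset ℕ} {n : ℕ}
    (hM : degMultiset G = M) (hn : M.card = n) :
    ∃ G' : SimpleGraph (Fin n), IsCaterpillar G' ∧ degMultiset G' = M ∧ Nonempty (G ≃g G') := by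
  let e : V ≃ Fin n := Fintype.equivFinOfCardEq (by rw [← card_degMultiset G, hM, hn])
  let φ : G ≃g G.map e.toEmbedding := Iso.map e G
  exact ⟨_, hG.of_iso φ, (degMultiset_eq_of_iso φ).symm.trans hM, ⟨φ⟩⟩

end Isomorphism

section AttachLeaves

variable {V W : Type*} {G : SimpleGraph V} {H : SimpleGraph W} {L : V → Type*} {M : W → Type*}

/-- The graph obtained from `G` by attaching to each vertex `v` one pendant leaf for every element
of `L v`. The vertices of `G` are the `Sum.inl v`, the leaves at `v` are the `Sum.inr ⟨v, l⟩`. -/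
def attachLeaves (G : SimpleGraph V) (L : V → Type*) : SimpleGraph (V ⊕ Σ v, L v) where
  Adj
    | .inl v, .inl w => G.Adj v w
    | .inl v, .inr l => l.1 = v
    | .inr l, .inl v => l.1 = v
    | .inr _, .inr _ => False
  symm := ⟨by
    rintro (v | l) (w | m) h
    exacts [G.adj_symm h, h, h, h]⟩
  loopless := ⟨by
    rintro (v | l) h
    exacts [G.irrefl h, h]⟩

@[simp]
lemma attachLeaves_adj_inl_inl {v w : V} :
    (attachLeaves G L).Adj (.inl v) (.inl w) ↔ G.Adj v w := Iff.rfl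

@[simp]
lemma attachLeaves_adj_inl_inr {v : V} {l : Σ v, L v} :
    (attachLeaves G L).Adj (.inl v) (.inr l) ↔ l.1 = v := Iff.rfl

lemma neighborSet_attachLeaves_inr (l : Σ v, L v) :
    (attachLeaves G L).neighborSet (.inr l) = {.inl l.1} := by
  ext (v | m)
  · simp [attachLeaves, eq_comm]
  · simp [attachLeaves]

/-- The inclusion of `G` as an induced subgraph of `attachLeaves G L`. -/
def attachLeavesInl (G : SimpleGraph V) (L : V → Type*) : G ↪g attachLeaves G L where
  toFun := Sum.inl
  inj' := Sum.inl_injective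
  map_rel_iff' := Iff.rfl

lemma connected_attachLeaves (hG : G.Connected) : (attachLeaves G L).Connected := by
  obtain ⟨v₀⟩ := hG.nonempty
  have hinl (v : V) : (attachLeaves G L).Reachable (.inl v₀) (.inl v) :=
    (hG.preconnected v₀ v).map (attachLeavesInl G L).toHom
  rw [connected_iff_exists_forall_reachable]
  refine ⟨.inl v₀, ?_⟩
  rintro (v | l)
  · exact hinl v
  · exact (hinl l.1).trans (attachLeaves_adj_inl_inr.2 rfl).reachable

lemma isAcyclic_attachLeaves (hG : G.IsAcyclic) : (attachLeaves G L).IsAcyclic := by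
  refine isAcyclic_of_isAcyclic_induce
    ((attachLeavesInl G L).isoInduceRange.isAcyclic_iff.1 hG) ?_
  rintro (v | l) hv
  · exact absurd (Set.mem_range_self v) hv
  · rw [neighborSet_attachLeaves_inr]
    exact Set.subsingleton_singleton

lemma isCaterpillar_attachLeaves (hG : G.IsTree) {u w : V} {p : G.Walk u w} (hp : p.IsPath)
    (hsupp : ∀ v, v ∈ p.support) : IsCaterpillar (attachLeaves G L) := by
  refine ⟨connected_attachLeaves hG.connected, isAcyclic_attachLeaves hG.isAcyclic, _, _,
    p.map (attachLeavesInl G L).toHom,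
    hp.map (attachLeavesInl G L).injective, ?_⟩
  rintro (v | l) ⟨a, b, hab, ha, hb⟩
  · rw [Walk.support_map]
    exact List.mem_map_of_mem (hsupp v)
  · rw [← mem_neighborSet, neighborSet_attachLeaves_inr] at ha hb
    exact absurd (ha.trans hb.symm) hab

lemma degree_attachLeaves_inr (l : Σ v, L v)
    [Fintype ((attachLeaves G L).neighborSet (.inr l))] :
    (attachLeaves G L).degree (.inr l) = 1 := by
  rw [← card_neighborSet_eq_degree, ← Nat.card_eq_fintype_card, Nat.card_coe_set_eq,
    neighborSet_attachLeaves_inr, Set.ncard_singleton]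

lemma degree_attachLeaves_inl (v : V) [Fintype (G.neighborSet v)] [Fintype (L v)]
    [Fintype ((attachLeaves G L).neighborSet (.inl v))] :
    (attachLeaves G L).degree (.inl v) = G.degree v + Fintype.card (L v) := by
  have hN : (attachLeaves G L).neighborFinset (.inl v) =
      (G.neighborFinset v).disjSum (Finset.univ.map (.sigmaMk v)) := by
    ext (w | ⟨w, l⟩)
    · simp
    · simp only [mem_neighborFinset, attachLeaves_adj_inl_inr, Finset.inr_mem_disjSum,
        Finset.mem_map, Finset.mem_univ, true_and, Function.Embedding.sigmaMk_apply]
      constructor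
      · rintro rfl
        exact ⟨l, rfl⟩
      · rintro ⟨m, hm⟩
        exact (congrArg Sigma.fst hm).symm
  rw [← card_neighborFinset_eq_degree, hN, Finset.card_disjSum, Finset.card_map,
    card_neighborFinset_eq_degree, Finset.card_univ]

lemma mapsTo_range_inl_of_attachLeaves_iso [(attachLeaves G L).LocallyFinite]
    [(attachLeaves H M).LocallyFinite] (φ : attachLeaves G L ≃g attachLeaves H M)
    (hG : ∀ v, (attachLeaves G L).degree (.inl v) ≠ 1) :
    Set.MapsTo φ (Set.range Sum.inl) (Set.range Sum.inl) := by
  rintro _ ⟨v, rfl⟩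
  rcases hφ : φ (.inl v) with w | m
  · exact Set.mem_range_self w
  · exact absurd ((φ.degree_eq _).symm.trans (hφ ▸ degree_attachLeaves_inr m)) (hG v)

lemma exists_iso_of_attachLeaves_iso [(attachLeaves G L).LocallyFinite]
    [(attachLeaves H M).LocallyFinite] (φ : attachLeaves G L ≃g attachLeaves H M)
    (hG : ∀ v, (attachLeaves G L).degree (.inl v) ≠ 1)
    (hH : ∀ w, (attachLeaves H M).degree (.inl w) ≠ 1) :
    ∃ ψ : G ≃g H, ∀ v, φ (.inl v) = .inl (ψ v) := by
  have hbij : Set.BijOn φ (Set.range (attachLeavesInl G L)) (Set.range (attachLeavesInl H M)) :=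
    ⟨mapsTo_range_inl_of_attachLeaves_iso φ hG, φ.injective.injOn, fun w hw =>
      ⟨φ.symm w, mapsTo_range_inl_of_attachLeaves_iso φ.symm hH hw, φ.apply_symm_apply w⟩⟩
  let ψ : G ≃g H := ((attachLeavesInl G L).isoInduceRange.trans (φ.induce hbij)).trans
    (attachLeavesInl H M).isoInduceRange.symm
  refine ⟨ψ, fun v => ?_⟩
  have h := (attachLeavesInl H M).isoInduceRange.apply_symm_apply
    (φ.induce hbij ((attachLeavesInl G L).isoInduceRange v))
  exact (congrArg Subtype.val h).symm

lemma degMultiset_attachLeaves [Fintype V] [∀ v, Fintype (G.neighborSet v)]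
    [∀ v, Fintype (L v)] :
    degMultiset (attachLeaves G L) =
      Finset.univ.val.map (fun v => G.degree v + Fintype.card (L v)) +
        Multiset.replicate (∑ v, Fintype.card (L v)) 1 := by
  classical
  unfold degMultiset
  rw [← Finset.univ_disjSum_univ, Finset.val_disjSum, Multiset.disjSum, Multiset.map_add,
    Multiset.map_map, Multiset.map_map]
  congr 1
  · exact Multiset.map_congr rfl fun v _ => degree_attachLeaves_inl v
  · simp [degree_attachLeaves_inr]

end AttachLeaves

section FillDegrees

variable {V W : Type*} {G : SimpleGraph V} {H : SimpleGraph W} [G.LocallyFinite]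
  [H.LocallyFinite] {x : V → ℕ} {y : W → ℕ}

/-- The graph obtained from `G` by attaching leaves until each vertex `v` of `G` has degree `x v`.
By truncated subtraction, `v` receives no leaf if its degree already exceeds `x v`. -/
abbrev fillDegrees (G : SimpleGraph V) [G.LocallyFinite] (x : V → ℕ) :
    SimpleGraph (V ⊕ Σ v, Fin (x v - G.degree v)) :=
  attachLeaves G fun v => Fin (x v - G.degree v)

lemma degree_fillDegrees_inl {v : V} (hv : G.degree v ≤ x v)
    [Fintype ((fillDegrees G x).neighborSet (.inl v))] :
    (fillDegrees G x).degree (.inl v) = x v := by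
  rw [degree_attachLeaves_inl, Fintype.card_fin, Nat.add_sub_of_le hv]

lemma exists_iso_of_fillDegrees_iso [(fillDegrees G x).LocallyFinite]
    [(fillDegrees H y).LocallyFinite] (φ : fillDegrees G x ≃g fillDegrees H y)
    (hGx : ∀ v, G.degree v ≤ x v) (hHy : ∀ w, H.degree w ≤ y w)
    (hx : ∀ v, x v ≠ 1) (hy : ∀ w, y w ≠ 1) :
    ∃ ψ : G ≃g H, ∀ v, y (ψ v) = x v := by
  obtain ⟨ψ, hψ⟩ := exists_iso_of_attachLeaves_iso φ
    (fun v => (degree_fillDegrees_inl (hGx v)).trans_ne (hx v))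
    (fun w => (degree_fillDegrees_inl (hHy w)).trans_ne (hy w))
  refine ⟨ψ, fun v => ?_⟩
  rw [← degree_fillDegrees_inl (hGx v), ← degree_fillDegrees_inl (hHy (ψ v)), ← hψ, φ.degree_eq]

lemma sum_sub_degree_of_isTree [Fintype V] (hG : G.IsTree) (hGx : ∀ v, G.degree v ≤ x v)
    (hx : ∀ v, 2 ≤ x v) : ∑ v, (x v - G.degree v) = 2 + ∑ v, (x v - 2) := by
  classical
  have hdegree : ∑ v, (x v - G.degree v) + ∑ v, G.degree v = ∑ v, x v := by
    rw [← Finset.sum_add_distrib]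
    exact Finset.sum_congr rfl fun v _ => Nat.sub_add_cancel (hGx v)
  have htwo : ∑ v, (x v - 2) + 2 * Fintype.card V = ∑ v, x v := by
    rw [mul_comm, ← smul_eq_mul, ← Finset.card_univ, ← Finset.sum_const, ← Finset.sum_add_distrib]
    exact Finset.sum_congr rfl fun v _ => Nat.sub_add_cancel (hx v)
  have hhandshake : ∑ v, G.degree v = 2 * G.edgeFinset.card := by
    convert G.sum_degrees_eq_twice_card_edges
  have hedges := hG.card_edgeFinset
  omega

lemma degMultiset_fillDegrees_of_isTree [Fintype V] (hG : G.IsTree)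
    (hGx : ∀ v, G.degree v ≤ x v) (hx : ∀ v, 2 ≤ x v) :
    degMultiset (fillDegrees G x) =
      Finset.univ.val.map x + Multiset.replicate (2 + ∑ v, (x v - 2)) 1 := by
  rw [degMultiset_attachLeaves]
  simp only [Fintype.card_fin, Nat.add_sub_of_le (hGx _), sum_sub_degree_of_isTree hG hGx hx]

end FillDegrees

section PathGraph

variable {n : ℕ}

instance decidableRelPathGraphAdj : DecidableRel (pathGraph n).Adj :=
  fun _ _ => decidable_of_iff _ pathGraph_adj.symm

lemma card_filter_val_add_one_eq (i : Fin n) :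
    (Finset.univ.filter fun j : Fin n => j.val + 1 = i.val).card =
      if i.val = 0 then 0 else 1 := by
  split_ifs with hi
  · rw [Finset.card_eq_zero, Finset.filter_eq_empty_iff]
    omega
  · refine Finset.card_eq_one.2 ⟨⟨i.val - 1, by omega⟩, ?_⟩
    ext j
    simp only [Finset.mem_filter, Finset.mem_univ, true_and, Finset.mem_singleton, Fin.ext_iff]
    omega

lemma card_filter_add_one_eq_val (i : Fin n) :
    (Finset.univ.filter fun j : Fin n => i.val + 1 = j.val).card =
      if i.val + 1 = n then 0 else 1 := by
  split_ifs with hi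
  · rw [Finset.card_eq_zero, Finset.filter_eq_empty_iff]
    omega
  · refine Finset.card_eq_one.2 ⟨⟨i.val + 1, by omega⟩, ?_⟩
    ext j
    simp only [Finset.mem_filter, Finset.mem_univ, true_and, Finset.mem_singleton, Fin.ext_iff]
    omega

lemma degree_pathGraph (i : Fin n) :
    (pathGraph n).degree i = (if i.val = 0 then 0 else 1) + (if i.val + 1 = n then 0 else 1) := by
  have hN : (pathGraph n).neighborFinset i =
      (Finset.univ.filter fun j : Fin n => j.val + 1 = i.val) ∪
        (Finset.univ.filter fun j : Fin n => i.val + 1 = j.val) := by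
    ext j
    simp [pathGraph_adj, or_comm]
  rw [← card_neighborFinset_eq_degree, hN, Finset.card_union_of_disjoint
    (Finset.disjoint_filter.2 (by omega)), card_filter_val_add_one_eq, card_filter_add_one_eq_val]

lemma degree_pathGraph_le_two (i : Fin n) : (pathGraph n).degree i ≤ 2 := by
  rw [degree_pathGraph]
  split_ifs <;> omega

lemma degree_pathGraph_ne_of_val_eq_zero_of_val_eq_one {i j : Fin n} (hn : 3 ≤ n)
    (hi : i.val = 0) (hj : j.val = 1) : (pathGraph n).degree i ≠ (pathGraph n).degree j := by
  rw [degree_pathGraph, degree_pathGraph]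
  split_ifs <;> omega

lemma isAcyclic_pathGraph (n : ℕ) : (pathGraph n).IsAcyclic := by
  refine isAcyclic_of_subsingleton_adj_le id ?_
  rintro i j ⟨hij, hj⟩ k ⟨hik, hk⟩
  rw [pathGraph_adj] at hij hik
  simp only [id, Fin.le_def] at hj hk
  omega

lemma isTree_pathGraph (n : ℕ) [NeZero n] : (pathGraph n).IsTree where
  connected := ⟨pathGraph_preconnected n⟩
  isAcyclic := isAcyclic_pathGraph n

lemma mem_support_pathGraph_walk_of_le_of_le {i j k : Fin n} (p : (pathGraph n).Walk i j)
    (hik : i ≤ k) (hkj : k ≤ j) : k ∈ p.support := by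
  induction p with
  | nil => simp [le_antisymm hkj hik]
  | @cons u v w huv p ih =>
    rw [Walk.support_cons, List.mem_cons]
    refine or_iff_not_imp_left.2 fun hne => ih ?_ hkj
    rw [pathGraph_adj] at huv
    omega

end PathGraph

section Caterpillar

variable {ℓ : ℕ} {x : Fin ℓ → ℕ}

/-- The caterpillar `C(x₁, …, x_ℓ)` with spine `pathGraph ℓ`, whose vertex `i`
stands for `c_{i+1}`. Its spine degrees are `x` as long as all of them are at least `2`. -/
abbrev caterpillar (x : Fin ℓ → ℕ) :
    SimpleGraph (Fin ℓ ⊕ Σ i, Fin (x i - (pathGraph ℓ).degree i)) :=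
  fillDegrees (pathGraph ℓ) x

lemma isCaterpillar_caterpillar [NeZero ℓ] (x : Fin ℓ → ℕ) : IsCaterpillar (caterpillar x) := by
  have htree := isTree_pathGraph ℓ
  obtain ⟨p, hp⟩ := htree.connected.exists_isPath 0 ⊤
  exact isCaterpillar_attachLeaves htree hp fun i =>
    mem_support_pathGraph_walk_of_le_of_le p (Fin.zero_le i) le_top

lemma degMultiset_caterpillar [NeZero ℓ] (hx : ∀ i, 2 ≤ x i) :
    degMultiset (caterpillar x) =
      Finset.univ.val.map x + Multiset.replicate (2 + ∑ i, (x i - 2)) 1 :=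
  degMultiset_fillDegrees_of_isTree (isTree_pathGraph ℓ)
    (fun i => (degree_pathGraph_le_two i).trans (hx i)) hx

lemma degMultiset_caterpillar_comp_perm [NeZero ℓ] (hx : ∀ i, 2 ≤ x i)
    (σ : Equiv.Perm (Fin ℓ)) :
    degMultiset (caterpillar (x ∘ σ)) =
      Finset.univ.val.map x + Multiset.replicate (2 + ∑ i, (x i - 2)) 1 := by
  have hmap : Finset.univ.val.map (x ∘ σ) = Finset.univ.val.map x := by
    rw [← Multiset.map_map, Multiset.map_univ_val_equiv]
  have hsum : ∑ i, ((x ∘ σ) i - 2) = ∑ i, (x i - 2) := Equiv.sum_comp σ fun i => x i - 2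
  rw [degMultiset_caterpillar (x := x ∘ σ) fun i => hx (σ i), hmap, hsum]

lemma not_nonempty_iso_caterpillar_comp_swap {i j : Fin ℓ} (hx : ∀ k, 2 ≤ x k)
    (hne : ∀ k, k ≠ i → x i ≠ x k) (hij : (pathGraph ℓ).degree i ≠ (pathGraph ℓ).degree j) :
    ¬ Nonempty (caterpillar x ≃g caterpillar (x ∘ Equiv.swap i j)) := by
  classical
  rintro ⟨φ⟩
  have htwo_le (k : Fin ℓ) : 2 ≤ (x ∘ Equiv.swap i j) k := hx _
  obtain ⟨ψ, hψ⟩ := exists_iso_of_fillDegrees_iso φ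
    (fun k => (degree_pathGraph_le_two k).trans (hx k))
    (fun k => (degree_pathGraph_le_two k).trans (htwo_le k))
    (fun k => (Nat.lt_of_succ_le (hx k)).ne') (fun k => (Nat.lt_of_succ_le (htwo_le k)).ne')
  have hswap : Equiv.swap i j (ψ i) = i := by
    by_contra h
    exact hne _ h (hψ i).symm
  have hψi : ψ i = j := by
    rw [← Equiv.swap_apply_self i j (ψ i), hswap, Equiv.swap_apply_left]
  exact hij (by rw [← hψi, ψ.degree_eq])

end Caterpillar

/-- The exchange argument for caterpillars: if `ℓ ≥ 3` and the spine degrees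
`x₁, …, x_ℓ ≥ 2` satisfy `x₁ ≠ x_j` for all `j ≥ 2`, then there are two
non-isomorphic caterpillars with the same degree multiset, consisting of
`x₁, …, x_ℓ` together with `2 + ∑ᵢ (xᵢ - 2)` entries equal to `1`. -/
theorem two_caterpillar_realisations (ℓ : ℕ) (hℓ : 3 ≤ ℓ)
    (x : Fin ℓ → ℕ) (hx : ∀ i, 2 ≤ x i)
    (hne : ∀ j : Fin ℓ, j ≠ ⟨0, by omega⟩ → x ⟨0, by omega⟩ ≠ x j) :
    ∃ G G' : SimpleGraph (Fin (ℓ + (2 + ∑ i, (x i - 2)))),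
      IsCaterpillar G ∧ IsCaterpillar G' ∧
      degMultiset G =
        Finset.univ.val.map x + Multiset.replicate (2 + ∑ i, (x i - 2)) 1 ∧
      degMultiset G' =
        Finset.univ.val.map x + Multiset.replicate (2 + ∑ i, (x i - 2)) 1 ∧
      ¬ Nonempty (G ≃g G') := by
  have : NeZero ℓ := ⟨by omega⟩
  have hcard : (Finset.univ.val.map x + Multiset.replicate (2 + ∑ i, (x i - 2)) 1).card =
      ℓ + (2 + ∑ i, (x i - 2)) := by simp
  obtain ⟨G, hG, hdeg, ⟨e⟩⟩ :=
    (isCaterpillar_caterpillar x).exists_iso_fin (degMultiset_caterpillar hx) hcard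
  obtain ⟨G', hG', hdeg', ⟨e'⟩⟩ := (isCaterpillar_caterpillar _).exists_iso_fin
    (degMultiset_caterpillar_comp_perm hx (Equiv.swap ⟨0, by omega⟩ ⟨1, by omega⟩)) hcard
  refine ⟨G, G', hG, hG', hdeg, hdeg', ?_⟩
  rintro ⟨f⟩
  exact not_nonempty_iso_caterpillar_comp_swap hx hne
    (degree_pathGraph_ne_of_val_eq_zero_of_val_eq_one hℓ rfl rfl) ⟨(e.trans f).trans e'.symm⟩
end
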